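/- arXiv:2506.19989 — 5 statements merged into one kernel-verified Lean document; each statement's English description precedes it below -/
import Mathlib

section
/- Let A ≥ b₂ > b₁ > 0 and set θ₀ = (b₂ − b₁)/(A − b₁). Then for every N ∈ ℕ and all real numbers a₁, …, a_N satisfying ∑_{j=1}^{N} a_j ≥ b₂·N and a_j ≤ A for every 1 ≤ j ≤ N, there exist a natural number ℓ ≥ θ₀·N and indices 1 ≤ n₁ < n₂ < ⋯ < n_ℓ ≤ N such that for every i ∈ {1, …, ℓ} and every integer n with n_i < n ≤ N one has ∑_{j=n_i}^{n−1} a_j ≥ b₁·(n − n_i). -/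
/-!
Let `f k = ∑ j < k, (a j - b₁)`. An index `k` is a Pliss time exactly when `f k` is a minimum of `f`
over all later times up to `N + 1`. Going from `1` to `N + 1`, one climbs from such a minimum by at
most `A - b₁` in one step, and from any other time one jumps to a later time where `f` is smaller.
So `(b₂ - b₁) N ≤ f (N + 1) - f 1` is at most `A - b₁` times the number of Pliss times.
-/

open Finset

section FutureMinima

variable {G : Type*} [LinearOrder G]

/-- The times `k ∈ [s, t)` at which `f` is minimal over its remaining future, that is,
`f k ≤ f m` whenever `k < m ≤ t`. The final time `t` counts as future, but not as a minimum. -/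
def futureMinima (f : ℕ → G) (s t : ℕ) : Finset ℕ :=
  {k ∈ Ico s t | ∀ m ∈ Ioc k t, f k ≤ f m}

lemma mem_futureMinima {f : ℕ → G} {s t k : ℕ} :
    k ∈ futureMinima f s t ↔ k ∈ Ico s t ∧ ∀ m ∈ Ioc k t, f k ≤ f m :=
  mem_filter

lemma futureMinima_subset_of_le (f : ℕ → G) {r s : ℕ} (t : ℕ) (hrs : r ≤ s) :
    futureMinima f s t ⊆ futureMinima f r t :=
  filter_subset_filter _ (Ico_subset_Ico_left hrs)

lemma card_futureMinima_succ_lt {f : ℕ → G} {s t : ℕ} (hs : s ∈ futureMinima f s t) :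
    #(futureMinima f (s + 1) t) < #(futureMinima f s t) := by
  refine card_lt_card <| (ssubset_iff_of_subset <| futureMinima_subset_of_le f t s.le_succ).2
    ⟨s, hs, fun hs' ↦ ?_⟩
  exact s.not_succ_le_self (mem_Ico.1 (mem_futureMinima.1 hs').1).1

theorem sub_le_card_futureMinima_nsmul [AddCommGroup G] [IsOrderedAddMonoid G] {f : ℕ → G} {D : G}
    (hD : 0 ≤ D) {s t : ℕ} (hst : s ≤ t) (hstep : ∀ k ∈ Ico s t, f (k + 1) - f k ≤ D) :
    f t - f s ≤ #(futureMinima f s t) • D := by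
  induction hd : t - s using Nat.strong_induction_on generalizing s with
  | _ d ih =>
  have bound_from_later {r : ℕ} (hr : r ∈ Ioc s t) : f t - f r ≤ #(futureMinima f r t) • D := by
    obtain ⟨hsr, hrt⟩ := mem_Ioc.1 hr
    exact ih (t - r) (by lia) hrt (fun k hk ↦ hstep k (Ico_subset_Ico_left hsr.le hk)) rfl
  obtain rfl | hlt := hst.eq_or_lt
  · simpa only [sub_self] using nsmul_nonneg hD _
  by_cases hs : s ∈ futureMinima f s t
  · calc f t - f s = (f t - f (s + 1)) + (f (s + 1) - f s) := (sub_add_sub_cancel ..).symm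
      _ ≤ #(futureMinima f (s + 1) t) • D + D :=
        add_le_add (bound_from_later (mem_Ioc.2 ⟨s.lt_succ_self, hlt⟩))
          (hstep s (left_mem_Ico.2 hlt))
      _ = (#(futureMinima f (s + 1) t) + 1) • D := (succ_nsmul ..).symm
      _ ≤ #(futureMinima f s t) • D := nsmul_le_nsmul_left hD (card_futureMinima_succ_lt hs)
  · obtain ⟨m, hm, hfm⟩ : ∃ m ∈ Ioc s t, f m < f s := by
      simpa [mem_futureMinima, hlt, and_assoc] using hs
    calc f t - f s ≤ f t - f m := sub_le_sub_left hfm.le _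
      _ ≤ #(futureMinima f m t) • D := bound_from_later hm
      _ ≤ #(futureMinima f s t) • D :=
        nsmul_le_nsmul_left hD (card_le_card (futureMinima_subset_of_le f t (mem_Ioc.1 hm).1.le))

end FutureMinima

section PlissTimes

variable {R : Type*} [Ring R]

lemma sum_range_sub_const_sub_sum_range (a : ℕ → R) (b : R) {k m : ℕ} (hkm : k ≤ m) :
    ∑ j ∈ range m, (a j - b) - ∑ j ∈ range k, (a j - b) = ∑ j ∈ Ico k m, a j - b * (m - k) := by
  rw [← sum_Ico_eq_sub _ hkm, sum_sub_distrib, sum_const, Nat.card_Ico, nsmul_eq_mul',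
    Nat.cast_sub hkm]

variable [LinearOrder R]

/-- The Pliss times of `a 1, …, a N` at level `b`: the `k ∈ [1, N]` such that every block of
consecutive terms starting at `a k` and ending no later than `a N` has average at least `b`. They
are encoded as future minima of the partial sums of `a - b`; see `mem_plissTimes` for the blocks. -/
def plissTimes (a : ℕ → R) (b : R) (N : ℕ) : Finset ℕ :=
  futureMinima (fun k ↦ ∑ j ∈ range k, (a j - b)) 1 (N + 1)

variable [IsOrderedAddMonoid R]

lemma mem_plissTimes {a : ℕ → R} {b : R} {N k : ℕ} :
    k ∈ plissTimes a b N ↔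
      k ∈ Icc 1 N ∧ ∀ m ∈ Ioc k (N + 1), b * (m - k) ≤ ∑ j ∈ Ico k m, a j := by
  refine mem_futureMinima.trans <| and_congr Iff.rfl <| forall₂_congr fun m hm ↦ ?_
  rw [← sub_nonneg, sum_range_sub_const_sub_sum_range a b (mem_Ioc.1 hm).1.le, sub_nonneg]

theorem mul_le_card_plissTimes_mul {A b₁ b₂ : R} (hA : b₁ ≤ A) {N : ℕ} {a : ℕ → R}
    (hsum : b₂ * N ≤ ∑ j ∈ Icc 1 N, a j) (hbdd : ∀ j ∈ Icc 1 N, a j ≤ A) :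
    (b₂ - b₁) * N ≤ #(plissTimes a b₁ N) * (A - b₁) := by
  let f (k : ℕ) : R := ∑ j ∈ range k, (a j - b₁)
  have hstep : ∀ k ∈ Ico 1 (N + 1), f (k + 1) - f k ≤ A - b₁ := fun k hk ↦ by
    simpa only [f, sum_range_succ_sub_sum] using sub_le_sub_right (hbdd k hk) b₁
  calc (b₂ - b₁) * N = b₂ * N - b₁ * N := sub_mul ..
    _ ≤ ∑ j ∈ Icc 1 N, a j - b₁ * N := sub_le_sub_right hsum _
    _ = f (N + 1) - f 1 := by
      rw [sum_range_sub_const_sub_sum_range a b₁ N.succ_pos, Nat.cast_succ, Nat.cast_one,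
        add_sub_cancel_right]
      rfl
    _ ≤ #(plissTimes a b₁ N) • (A - b₁) :=
      sub_le_card_futureMinima_nsmul (sub_nonneg.2 hA) N.succ_pos hstep
    _ = #(plissTimes a b₁ N) * (A - b₁) := nsmul_eq_mul ..

end PlissTimes

theorem exists_strictMonoOn_mapsTo_Icc_one_card {α : Type*} [LinearOrder α] [Nonempty α]
    (s : Finset α) :
    ∃ n : ℕ → α, StrictMonoOn n (Set.Icc 1 #s) ∧ Set.MapsTo n (Set.Icc 1 #s) s := by
  let n (i : ℕ) : α :=
    if h : i - 1 < #s then s.orderEmbOfFin rfl ⟨i - 1, h⟩ else Classical.arbitrary α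
  have n_eq {i : ℕ} (hi : i ∈ Set.Icc 1 #s) :
      n i = s.orderEmbOfFin rfl ⟨i - 1, Nat.sub_one_lt_of_le hi.1 hi.2⟩ :=
    dif_pos _
  refine ⟨n, fun i hi j hj hij ↦ ?_, fun i hi ↦ ?_⟩
  · rw [n_eq hi, n_eq hj, OrderEmbedding.lt_iff_lt, Fin.mk_lt_mk]
    exact Nat.sub_lt_sub_right hi.1 hij
  · rw [n_eq hi]
    exact orderEmbOfFin_mem ..

theorem pliss_lemma_general {K : Type*} [Field K] [LinearOrder K] [IsStrictOrderedRing K]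
    {A b₁ b₂ : K} (hA : b₁ < A) {N : ℕ} {a : ℕ → K}
    (hsum : b₂ * N ≤ ∑ j ∈ Icc 1 N, a j) (hbdd : ∀ j, 1 ≤ j → j ≤ N → a j ≤ A) :
    ∃ (ℓ : ℕ) (n : ℕ → ℕ),
      (b₂ - b₁) / (A - b₁) * N ≤ ℓ ∧
      (∀ i, 1 ≤ i → i ≤ ℓ → 1 ≤ n i ∧ n i ≤ N) ∧
      (∀ i j, 1 ≤ i → i < j → j ≤ ℓ → n i < n j) ∧
      (∀ i, 1 ≤ i → i ≤ ℓ → ∀ m, n i < m → m ≤ N + 1 →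
        b₁ * (m - n i) ≤ ∑ j ∈ Ico (n i) m, a j) := by
  obtain ⟨n, n_strictMono, n_mem⟩ := exists_strictMonoOn_mapsTo_Icc_one_card (plissTimes a b₁ N)
  have n_pliss (i : ℕ) (h1 : 1 ≤ i) (hi : i ≤ #(plissTimes a b₁ N)) :=
    mem_plissTimes.1 (n_mem ⟨h1, hi⟩)
  refine ⟨#(plissTimes a b₁ N), n, ?_, fun i h1 hi ↦ mem_Icc.1 (n_pliss i h1 hi).1,
    fun i j h1 hij hj ↦ n_strictMono ⟨h1, hij.le.trans hj⟩ ⟨h1.trans hij.le, hj⟩ hij,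
    fun i h1 hi m him hm ↦ (n_pliss i h1 hi).2 m (mem_Ioc.2 ⟨him, hm⟩)⟩
  rw [div_mul_eq_mul_div, div_le_iff₀ (sub_pos.2 hA)]
  exact mul_le_card_plissTimes_mul hA.le hsum fun j hj ↦
    hbdd j (mem_Icc.1 hj).1 (mem_Icc.1 hj).2

/-- **The Pliss Lemma.**  Let `A ≥ b₂ > b₁ > 0` and `θ₀ = (b₂ − b₁)/(A − b₁)`.  For every
`N ∈ ℕ` and reals `a₁, …, a_N` with `∑_{j=1}^N a_j ≥ b₂·N` and `a_j ≤ A` for `1 ≤ j ≤ N`,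
there exist `ℓ ≥ θ₀·N` and indices `1 ≤ n₁ < ⋯ < n_ℓ ≤ N` such that for every `i` and every
`n` with `n_i < n ≤ N` one has `∑_{j=n_i}^{n−1} a_j ≥ b₁·(n − n_i)`. -/
theorem pliss_lemma (A b₁ b₂ : ℝ) (hA : b₂ ≤ A) (hb : b₁ < b₂) (hb₁ : 0 < b₁)
    (N : ℕ) (a : ℕ → ℝ)
    (hsum : b₂ * (N : ℝ) ≤ ∑ j ∈ Finset.Icc 1 N, a j)
    (hbdd : ∀ j : ℕ, 1 ≤ j → j ≤ N → a j ≤ A) :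
    ∃ (ℓ : ℕ) (n : ℕ → ℕ),
      ((b₂ - b₁) / (A - b₁)) * (N : ℝ) ≤ (ℓ : ℝ) ∧
      (∀ i : ℕ, 1 ≤ i → i ≤ ℓ → 1 ≤ n i ∧ n i ≤ N) ∧
      (∀ i j : ℕ, 1 ≤ i → i < j → j ≤ ℓ → n i < n j) ∧
      (∀ i : ℕ, 1 ≤ i → i ≤ ℓ → ∀ m : ℕ, n i < m → m ≤ N →
        b₁ * ((m : ℝ) - (n i : ℝ)) ≤ ∑ j ∈ Finset.Ico (n i) m, a j) := by
  obtain ⟨ℓ, n, hℓ, hn, n_lt, n_pliss⟩ := pliss_lemma_general (hb.trans_le hA) hsum hbdd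
  exact ⟨ℓ, n, hℓ, hn, n_lt, fun i h1 hi m him hm ↦ n_pliss i h1 hi m him (hm.trans N.le_succ)⟩
end

section
/- Let β ∈ (0,1), W ⊆ X, let t ≥ 1 be an integer and t' > 0 a real number. If x is a (β,W)-forward recurrence Pliss time for the orbit segment (x,t), and f_t(x) is a (β,W)-forward recurrence Pliss time for the orbit segment (f_t(x), t'), then x is a (β,W)-forward recurrence Pliss time for the orbit segment (x, t+t'). -/
/-- `x` is a `(β, W)`-forward recurrence Pliss time for the orbit segment `(x, t)`:
for every integer `0 ≤ s ≤ ⌊t⌋`, the number of integers `τ ∈ [0, s]` with `f_τ(x) ∈ W`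
is at most `β·(s+1)`. -/
def ForwardRecPliss {X : Type*} (f : ℝ → X → X) (β : ℝ) (W : Set X) (x : X) (t : ℝ) : Prop :=
  ∀ s : ℕ, s ≤ ⌊t⌋₊ →
    ({τ : ℕ | τ ≤ s ∧ f (τ : ℝ) x ∈ W}.ncard : ℝ) ≤ β * ((s : ℝ) + 1)

/-! Cut the orbit of `x` just before time `t`: the visits to `W` during `[0, s]` with `t ≤ s` are
those during `[0, t - 1]` together with the visits of `f_t(x)` during `[0, s - t]`, and the two
bounds `β * t` and `β * (s - t + 1)` add up to exactly `β * (s + 1)`. -/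

theorem count_le_mul_of_count_shift_le_mul {R : Type*} [NonAssocSemiring R] [PartialOrder R]
    [IsOrderedAddMonoid R] {p : ℕ → Prop} [DecidablePred p] {β : R} {a b : ℕ}
    (h_initial : ∀ n ≤ a, (Nat.count p n : R) ≤ β * n)
    (h_shift : ∀ n ≤ b, (Nat.count (fun k => p (a + k)) n : R) ≤ β * n) :
    ∀ n ≤ a + b, (Nat.count p n : R) ≤ β * n := by
  intro n hn
  rcases le_total n a with hna | han
  · exact h_initial n hna
  · obtain ⟨m, rfl⟩ := Nat.exists_eq_add_of_le han
    calc (Nat.count p (a + m) : R)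
        = Nat.count p a + Nat.count (fun k => p (a + k)) m := by
          rw [Nat.count_add, Nat.cast_add]
      _ ≤ β * a + β * m :=
          add_le_add (h_initial a le_rfl) (h_shift m (Nat.le_of_add_le_add_left hn))
      _ = β * (a + m : ℕ) := by rw [Nat.cast_add, mul_add]

theorem ncard_setOf_le_and_eq_count (p : ℕ → Prop) [DecidablePred p] (s : ℕ) :
    {τ : ℕ | τ ≤ s ∧ p τ}.ncard = Nat.count p (s + 1) := by
  rw [Nat.count_eq_card_filter_range, ← Set.ncard_coe_finset]
  simp

open Classical in
theorem forwardRecPliss_iff_count {X : Type*} {f : ℝ → X → X} {β : ℝ} {W : Set X} {x : X}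
    {t : ℝ} :
    ForwardRecPliss f β W x t ↔
      ∀ n ≤ ⌊t⌋₊ + 1, (Nat.count (fun τ : ℕ => f τ x ∈ W) n : ℝ) ≤ β * n := by
  simp only [ForwardRecPliss, ncard_setOf_le_and_eq_count]
  constructor
  · rintro h (_ | s) hs
    · simp
    · exact_mod_cast h s (Nat.le_of_succ_le_succ hs)
  · intro h s hs
    exact_mod_cast h (s + 1) (Nat.succ_le_succ hs)

theorem glue_recurrence_pliss_general {X : Type*} {f : ℝ → X → X} {β : ℝ} {W : Set X} {x : X}
    {t : ℕ} {t' : ℝ} (ht' : 0 ≤ t') (hadd : ∀ τ : ℕ, f (τ + t) x = f τ (f t x))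
    (h₁ : ForwardRecPliss f β W x t) (h₂ : ForwardRecPliss f β W (f t x) t') :
    ForwardRecPliss f β W x (t + t') := by
  classical
  have hfloor : ⌊(t : ℝ) + t'⌋₊ + 1 = t + (⌊t'⌋₊ + 1) := by
    rw [add_comm (t : ℝ), Nat.floor_add_natCast ht', add_comm _ t, add_assoc]
  rw [forwardRecPliss_iff_count] at h₁ h₂ ⊢
  rw [Nat.floor_natCast] at h₁
  rw [hfloor]
  refine count_le_mul_of_count_shift_le_mul (fun n hn => h₁ n (Nat.le_succ_of_le hn)) ?_
  simpa only [Nat.cast_add, add_comm (t : ℝ), hadd] using h₂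

/-- **Gluing of forward recurrence Pliss times.**  If `t ≥ 1` is an integer, `t' > 0`,
`x` is a `(β,W)`-forward recurrence Pliss time for `(x,t)` and `f_t(x)` is a
`(β,W)`-forward recurrence Pliss time for `(f_t(x), t')`, then `x` is a `(β,W)`-forward
recurrence Pliss time for `(x, t+t')`. -/
theorem glue_recurrence_pliss {X : Type*} [MetricSpace X] [CompactSpace X]
    (f : ℝ → X → X)
    (hcont : Continuous fun p : ℝ × X => f p.1 p.2)
    (hf0 : ∀ x : X, f 0 x = x)
    (hadd : ∀ s t : ℝ, ∀ x : X, f (s + t) x = f s (f t x))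
    (β : ℝ) (hβ : β ∈ Set.Ioo (0 : ℝ) 1)
    (W : Set X) (x : X)
    (t : ℕ) (ht : 1 ≤ t) (t' : ℝ) (ht' : 0 < t')
    (h₁ : ForwardRecPliss f β W x (t : ℝ))
    (h₂ : ForwardRecPliss f β W (f (t : ℝ) x) t') :
    ForwardRecPliss f β W x ((t : ℝ) + t') :=
  glue_recurrence_pliss_general ht'.le (fun τ => hadd τ t x) h₁ h₂
end

section
/- Let X be a compact metric space, let (μ_n) be a sequence of Borel probability measures on X converging to a Borel probability measure μ in the weak-* topology, let c ≥ 0, and let (E_n) be a sequence of subsets of X with μ_n(E_n) ≥ c for every n (measures being evaluated as outer measures on arbitrary sets). Define E := ⋂_{N∈ℕ} closure(⋃_{n ≥ N} E_n), the set of all limit points of sequences (x_{k_i}) with x_{k_i} ∈ E_{n_i} and n_i → ∞. Then E is compact and μ(E) ≥ c. -/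
open MeasureTheory Filter Topology

/-!
Continuity from above reduces the claim to the closed tails `closure (⋃ n ≥ N, E n)`. Each of them
contains all but an initial part of the `E n`, so the portmanteau inequality
`limsup μ_n(F) ≤ μ(F)` for closed `F` bounds its `μ`-measure from below by `limsup μ_n(E n)`.
-/

open scoped BoundedContinuousFunction ENNReal

section KuratowskiLimsup

variable {ι X : Type*} [Preorder ι] [TopologicalSpace X]

/-- The Kuratowski upper limit of a family of sets: the points all of whose neighbourhoods meet
`E n` for arbitrarily late `n`. It is encoded as the intersection of the closures of the tails. -/
def kuratowskiLimsup (E : ι → Set X) : Set X :=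
  ⋂ N, closure (⋃ n ≥ N, E n)

theorem isClosed_kuratowskiLimsup (E : ι → Set X) : IsClosed (kuratowskiLimsup E) :=
  isClosed_iInter fun _ => isClosed_closure

theorem antitone_closure_biUnion_ge (E : ι → Set X) :
    Antitone fun N => closure (⋃ n ≥ N, E n) :=
  fun _ _ hMN => closure_mono (Set.biUnion_subset_biUnion_left fun _ hn => hMN.trans hn)

theorem subset_closure_biUnion_ge (E : ι → Set X) {N n : ι} (hn : N ≤ n) :
    E n ⊆ closure (⋃ n ≥ N, E n) :=
  (Set.subset_biUnion_of_mem (u := E) (s := Set.Ici N) hn).trans subset_closure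

variable [MeasurableSpace X] [OpensMeasurableSpace X]

theorem measure_kuratowskiLimsup_eq_iInf [IsDirectedOrder ι] [Nonempty ι]
    [(atTop : Filter ι).IsCountablyGenerated] (μ : Measure X) [IsFiniteMeasure μ]
    (E : ι → Set X) :
    μ (kuratowskiLimsup E) = ⨅ N, μ (closure (⋃ n ≥ N, E n)) :=
  (antitone_closure_biUnion_ge E).measure_iInter
    (fun _ => isClosed_closure.nullMeasurableSet) ⟨Classical.arbitrary ι, measure_ne_top _ _⟩

variable [HasOuterApproxClosed X] {μs : ι → FiniteMeasure X} {μ : FiniteMeasure X}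

theorem limsup_measure_le_measure_closure_biUnion_ge (hμ : Tendsto μs atTop (𝓝 μ))
    (E : ι → Set X) (N : ι) :
    limsup (fun n => (μs n : Measure X) (E n)) atTop ≤
      (μ : Measure X) (closure (⋃ n ≥ N, E n)) :=
  calc limsup (fun n => (μs n : Measure X) (E n)) atTop
      ≤ limsup (fun n => (μs n : Measure X) (closure (⋃ n ≥ N, E n))) atTop :=
        limsup_le_limsup <| (eventually_ge_atTop N).mono fun _ hn =>
          measure_mono (subset_closure_biUnion_ge E hn)
    _ ≤ (μ : Measure X) (closure (⋃ n ≥ N, E n)) :=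
        FiniteMeasure.limsup_measure_closed_le_of_tendsto hμ isClosed_closure

theorem limsup_measure_le_measure_kuratowskiLimsup [IsDirectedOrder ι] [Nonempty ι]
    [(atTop : Filter ι).IsCountablyGenerated] (hμ : Tendsto μs atTop (𝓝 μ)) (E : ι → Set X) :
    limsup (fun n => (μs n : Measure X) (E n)) atTop ≤ (μ : Measure X) (kuratowskiLimsup E) := by
  rw [measure_kuratowskiLimsup_eq_iInf]
  exact le_iInf (limsup_measure_le_measure_closure_biUnion_ge hμ E)

end KuratowskiLimsup

theorem limit_of_large_sets_general {ι X : Type*} [Preorder ι] [IsDirectedOrder ι] [Nonempty ι]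
    [(atTop : Filter ι).IsCountablyGenerated] [TopologicalSpace X] [HasOuterApproxClosed X]
    [MeasurableSpace X] [OpensMeasurableSpace X]
    (μs : ι → Measure X) (hfin : ∀ n, IsFiniteMeasure (μs n))
    (μ : Measure X) [IsFiniteMeasure μ]
    (hconv : ∀ φ : X →ᵇ ℝ,
      Tendsto (fun n => ∫ x, φ x ∂(μs n)) atTop (𝓝 (∫ x, φ x ∂μ)))
    (c : ℝ≥0∞) (E : ι → Set X) (hE : ∃ᶠ n in atTop, c ≤ μs n (E n)) :
    IsClosed (kuratowskiLimsup E) ∧ c ≤ μ (kuratowskiLimsup E) := by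
  let νs : ι → FiniteMeasure X := fun n => ⟨μs n, hfin n⟩
  let ν : FiniteMeasure X := ⟨μ, inferInstance⟩
  have hν : Tendsto νs atTop (𝓝 ν) :=
    FiniteMeasure.tendsto_iff_forall_integral_tendsto.mpr hconv
  exact ⟨isClosed_kuratowskiLimsup E,
    (le_limsup_of_frequently_le hE).trans (limsup_measure_le_measure_kuratowskiLimsup hν E)⟩

/-- **Weak-* limits and limit sets.**  Let `X` be a compact metric space, `(μ_n)` Borel
probability measures converging weak-* to `μ`, `c ≥ 0`, and `E_n ⊆ X` sets with
`μ_n(E_n) ≥ c` (outer measure).  Then `E := ⋂_N closure(⋃_{n ≥ N} E_n)` is compact and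
`μ(E) ≥ c`. -/
theorem limit_of_large_sets {X : Type*} [MetricSpace X] [CompactSpace X]
    [MeasurableSpace X] [BorelSpace X]
    (μs : ℕ → Measure X) (hprob : ∀ n, IsProbabilityMeasure (μs n))
    (μ : Measure X) [IsProbabilityMeasure μ]
    (hconv : ∀ φ : C(X, ℝ),
      Tendsto (fun n => ∫ x, φ x ∂(μs n)) atTop (𝓝 (∫ x, φ x ∂μ)))
    (c : ℝ) (hc : 0 ≤ c)
    (E : ℕ → Set X) (hE : ∀ n, ENNReal.ofReal c ≤ μs n (E n)) :
    IsCompact (⋂ N : ℕ, closure (⋃ n ≥ N, E n)) ∧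
    ENNReal.ofReal c ≤ μ (⋂ N : ℕ, closure (⋃ n ≥ N, E n)) := by
  exact (limit_of_large_sets_general μs (fun _ => inferInstance) μ
    (fun φ => hconv φ.toContinuousMap) _ E (Frequently.of_forall hE)).imp_left IsClosed.isCompact
end

section
/- Let (f_t)_{t∈ℝ} be a continuous flow on a compact metric space X, let U ⊆ X be open, and suppose the set Λ := {x ∈ X : f_t(x) ∈ closure(U) for all t ∈ ℝ} is nonempty and satisfies Λ ⊆ U (so U is an isolating neighborhood of the maximal invariant set Λ). Let U₁ be any open set with Λ ⊆ U₁ ⊆ U, and let φ : X → ℝ be continuous. Then P(O(U), φ) = P(O(U₁), φ) = P(Λ×(0,∞), φ); that is, the pressures of the collections of orbit segments contained in U, of those contained in U₁, and of those contained in Λ all equal the topological pressure P(φ, X|_Λ) of the flow restricted to Λ. -/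
open Filter Topology
open scoped ENNReal

variable {X : Type*}

/-- A set `E` is `(t, δ)`-separated for the flow `f`: any two distinct points of `E`
are more than `δ` apart at some time `s ∈ [0, t]`. -/
def IsSeparatedSet [MetricSpace X] (f : ℝ → X → X) (t δ : ℝ) (E : Set X) : Prop :=
  ∀ x ∈ E, ∀ y ∈ E, x ≠ y → ∃ s ∈ Set.Icc (0 : ℝ) t, δ < dist (f s x) (f s y)

/-- Partition function `Λ(C, φ, δ, t)`: the supremum of `∑_{x∈E} exp(∫₀ᵗ φ(f_s x) ds)`
over finite `(t,δ)`-separated subsets `E` of `C_t = {x : (x,t) ∈ C}`. -/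
noncomputable def partitionFn [MetricSpace X] (f : ℝ → X → X) (φ : X → ℝ)
    (C : Set (X × ℝ)) (δ t : ℝ) : ℝ≥0∞ :=
  ⨆ (E : Finset X) (_ : (E : Set X) ⊆ {x | (x, t) ∈ C})
    (_ : IsSeparatedSet f t δ (E : Set X)),
      ∑ x ∈ E, ENNReal.ofReal (Real.exp (∫ s in (0:ℝ)..t, φ (f s x)))

/-- Pressure of `φ` on the collection `C` at scale `δ`:
`P(C, φ, δ) = limsup_{t→∞} (1/t) log Λ(C, φ, δ, t)`. -/
noncomputable def pressureAt [MetricSpace X] (f : ℝ → X → X) (φ : X → ℝ)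
    (C : Set (X × ℝ)) (δ : ℝ) : EReal :=
  Filter.limsup
    (fun t : ℝ => (((1 : ℝ) / t : ℝ) : EReal) * ENNReal.log (partitionFn f φ C δ t))
    Filter.atTop

/-- Pressure of `φ` on the collection `C`: `P(C, φ) = lim_{δ→0⁺} P(C, φ, δ)` (the limit
exists since `P(C, φ, δ)` is nonincreasing in `δ`, so it equals the limsup as `δ → 0⁺`). -/
noncomputable def pressure [MetricSpace X] (f : ℝ → X → X) (φ : X → ℝ)
    (C : Set (X × ℝ)) : EReal :=
  Filter.limsup (fun δ : ℝ => pressureAt f φ C δ) (nhdsWithin 0 (Set.Ioi 0))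

/-- `O(V)`: the collection of finite orbit segments `(x, t)`, `t > 0`, entirely contained
in `V`. -/
def orbitSegments (f : ℝ → X → X) (V : Set X) : Set (X × ℝ) :=
  {p : X × ℝ | 0 < p.2 ∧ ∀ s ∈ Set.Ico (0 : ℝ) p.2, f s p.1 ∈ V}

/-!
If an orbit segment stays in the closed set `K` during the times `[-T, T]` with `T` large, then by
compactness its midpoint is close to the maximal invariant set `Λ` of `K`. So cut an orbit segment
of length `t` in `K` into blocks of length `τ`: all blocks except a number independent of `t` are
shadowed by points of a maximal `(τ, δ)`-separated subset of `Λ`, and the exceptional ones by points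
of a finite `(τ, δ)`-spanning set of the whole space. A `(t, 4δ)`-separated set is determined by
these codes, which bounds its partition sum by `A · exp (v t) · Z ^ (t / τ)`, where `Z` is the
partition function of `Λ` at time `τ` and `v` is the oscillation of `φ` at scale `2δ`. Taking
logarithms, dividing by `t` and letting `t → ∞`, `τ → ∞`, `δ → 0` gives `P(O(K), φ) ≤ P(Λ, φ)`.
-/

open Set ENNReal

section Growth

theorem tendsto_ereal_add_coe {α : Type*} {l : Filter α} {g : α → EReal} {h : α → ℝ} {a : EReal}
    {v : ℝ} (hg : Tendsto g l (𝓝 a)) (hh : Tendsto h l (𝓝 v)) :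
    Tendsto (fun x => g x + h x) l (𝓝 (a + v)) :=
  (EReal.continuousAt_add (p := (a, (v : EReal))) (.inr (EReal.coe_ne_bot v))
    (.inr (EReal.coe_ne_top v))).tendsto.comp (hg.prodMk_nhds (EReal.tendsto_coe.2 hh))

theorem ereal_le_of_forall_pos_le_add {a b : EReal} (h : ∀ v : ℝ, 0 < v → a ≤ b + v) :
    a ≤ b := by
  have hlim : Tendsto (fun v : ℝ => b + (v : EReal)) (𝓝[>] 0) (𝓝 (b + ((0 : ℝ) : EReal))) :=
    tendsto_ereal_add_coe tendsto_const_nhds (tendsto_id.mono_left nhdsWithin_le_nhds)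
  rw [EReal.coe_zero, add_zero] at hlim
  exact ge_of_tendsto hlim (eventually_nhdsWithin_of_forall h)

theorem tendsto_natFloor_div_sub_div {τ : ℝ} (hτ : 0 < τ) (m : ℕ) :
    Tendsto (fun t : ℝ => ((⌊t / τ⌋₊ - m : ℕ) : ℝ) / t) atTop (𝓝 (1 / τ)) := by
  have hdiv : Tendsto (fun t : ℝ => t / τ) atTop atTop := tendsto_id.atTop_div_const hτ
  have hfloor : Tendsto (fun t : ℝ => (⌊t / τ⌋₊ : ℝ) / (t / τ) * (1 / τ)) atTop (𝓝 (1 / τ)) := by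
    simpa using (tendsto_nat_floor_div_atTop.comp hdiv).mul_const (1 / τ)
  have hsub : Tendsto (fun t : ℝ => (m : ℝ) / t) atTop (𝓝 0) :=
    tendsto_const_nhds.div_atTop tendsto_id
  have hlim := hfloor.sub hsub
  rw [sub_zero] at hlim
  refine hlim.congr' ?_
  filter_upwards [eventually_gt_atTop 0, hdiv.eventually_ge_atTop (m : ℝ)] with t ht hmt
  rw [Nat.cast_sub (Nat.le_floor hmt)]
  field_simp

theorem log_mul_exp_mul_pow_le {A Z : ℝ≥0∞} (hA : A ≠ ∞) (r : ℝ) (n : ℕ) :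
    ENNReal.log (A * ENNReal.ofReal (Real.exp r) * Z ^ n) ≤
      (((ENNReal.log A).toReal + r : ℝ) : EReal) + (n : EReal) * ENNReal.log Z := by
  rw [ENNReal.log_mul_add, ENNReal.log_mul_add, ENNReal.log_pow,
    ENNReal.log_ofReal_of_pos (Real.exp_pos r), Real.log_exp, EReal.coe_add]
  gcongr
  exact EReal.le_coe_toReal (mt ENNReal.log_eq_top_iff.1 hA)

theorem limsup_log_le_of_le_mul_exp_mul_pow {u : ℝ → ℝ≥0∞} {A Z : ℝ≥0∞} {v τ : ℝ} {m : ℕ}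
    (hA : A ≠ ∞) (hτ : 0 < τ)
    (hu : ∀ t > 0, u t ≤ A * ENNReal.ofReal (Real.exp (v * t)) * Z ^ (⌊t / τ⌋₊ - m)) :
    limsup (fun t : ℝ => ((1 / t : ℝ) : EReal) * ENNReal.log (u t)) atTop ≤
      ((1 / τ : ℝ) : EReal) * ENNReal.log Z + v := by
  set a := (ENNReal.log A).toReal
  have hreal : Tendsto (fun t : ℝ => a / t + v) atTop (𝓝 v) := by
    simpa using (tendsto_const_nhds.div_atTop tendsto_id).add_const v
  have hpow : Tendsto (fun t : ℝ => ((((⌊t / τ⌋₊ - m : ℕ) : ℝ) / t : ℝ) : EReal) * ENNReal.log Z)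
      atTop (𝓝 (((1 / τ : ℝ) : EReal) * ENNReal.log Z)) := by
    have hne : ((1 / τ : ℝ) : EReal) ≠ 0 := by exact_mod_cast (one_div_pos.2 hτ).ne'
    exact EReal.Tendsto.mul_const (EReal.tendsto_coe.2 (tendsto_natFloor_div_sub_div hτ m))
      (.inl hne) (.inl hne)
  rw [← (tendsto_ereal_add_coe hpow hreal).limsup_eq]
  refine limsup_le_limsup ?_
  filter_upwards [eventually_gt_atTop 0] with t ht
  have hinv : (0 : EReal) ≤ ((1 / t : ℝ) : EReal) := by exact_mod_cast (one_div_pos.2 ht).le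
  calc ((1 / t : ℝ) : EReal) * ENNReal.log (u t)
      ≤ ((1 / t : ℝ) : EReal) * (((a + v * t : ℝ) : EReal) +
          ((⌊t / τ⌋₊ - m : ℕ) : EReal) * ENNReal.log Z) :=
        mul_le_mul_of_nonneg_left
          ((ENNReal.log_monotone (hu t ht)).trans (log_mul_exp_mul_pow_le hA _ _)) hinv
    _ = ((((⌊t / τ⌋₊ - m : ℕ) : ℝ) / t : ℝ) : EReal) * ENNReal.log Z +
          ((a / t + v : ℝ) : EReal) := by
        rw [EReal.left_distrib_of_nonneg_of_ne_top hinv (EReal.coe_ne_top _), ← mul_assoc,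
          ← EReal.coe_natCast, ← EReal.coe_mul, ← EReal.coe_mul, add_comm]
        congr 3 <;> field_simp

end Growth

section Counting

theorem sum_le_mul_prod_sum_of_injOn {Y ι : Type*} [Fintype ι] {E : Finset X} {c : X → ι → Y}
    (hinj : InjOn c E) {S : ι → Finset Y} (hc : ∀ x ∈ E, ∀ i, c x i ∈ S i)
    {W : X → ℝ≥0∞} {w : Y → ℝ≥0∞} {a : ℝ≥0∞} (hW : ∀ x ∈ E, W x ≤ a * ∏ i, w (c x i)) :
    ∑ x ∈ E, W x ≤ a * ∏ i, ∑ y ∈ S i, w y := by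
  classical
  have hcodes : E.image c ⊆ Fintype.piFinset S :=
    Finset.image_subset_iff.2 fun x hx => Fintype.mem_piFinset.2 (hc x hx)
  calc ∑ x ∈ E, W x ≤ ∑ x ∈ E, a * ∏ i, w (c x i) := Finset.sum_le_sum hW
    _ = a * ∑ p ∈ E.image c, ∏ i, w (p i) := by rw [← Finset.mul_sum, Finset.sum_image hinj]
    _ ≤ a * ∑ p ∈ Fintype.piFinset S, ∏ i, w (p i) := by gcongr
    _ = a * ∏ i, ∑ y ∈ S i, w y := by rw [Finset.prod_univ_sum]

theorem prod_range_ite_interior_le (n k : ℕ) (a : ℝ≥0∞) {b : ℝ≥0∞} (hb : 1 ≤ b) :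
    ∏ j ∈ Finset.range (n + 1), (if k ≤ j ∧ j + k < n then a else b) ≤
      a ^ (n - 2 * k) * b ^ (2 * k + 1) := by
  have hinterior : {j ∈ Finset.range (n + 1) | k ≤ j ∧ j + k < n} = Finset.Ico k (n - k) := by
    ext j
    simp only [Finset.mem_filter, Finset.mem_range, Finset.mem_Ico]
    omega
  have hcard : (Finset.Ico k (n - k)).card = n - 2 * k := by
    rw [Nat.card_Ico]
    omega
  have hcompl := Finset.card_filter_add_card_filter_not (s := Finset.range (n + 1))
    (fun j => k ≤ j ∧ j + k < n)
  rw [hinterior, hcard, Finset.card_range] at hcompl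
  rw [Finset.prod_ite, Finset.prod_const, Finset.prod_const, hinterior, hcard]
  gcongr
  omega

end Counting

section BowenRel

/-- The relation of being `δ`-close during the times `[0, t]`, that is, of lying in each other's
closed Bowen ball. Its separated sets and covers in the sense of `SetRel` are the
`(t, δ)`-separated and the `(t, δ)`-spanning sets. -/
def bowenRel [PseudoMetricSpace X] (f : ℝ → X → X) (t δ : ℝ) : SetRel X X :=
  {p | ∀ s ∈ Icc (0 : ℝ) t, dist (f s p.1) (f s p.2) ≤ δ}

theorem isSeparatedSet_iff_isSeparated_bowenRel [MetricSpace X] {f : ℝ → X → X} {t δ : ℝ}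
    {E : Set X} : IsSeparatedSet f t δ E ↔ (bowenRel f t δ).IsSeparated E := by
  simp only [IsSeparatedSet, SetRel.IsSeparated, Set.Pairwise, bowenRel, mem_ofPred_eq, not_forall,
    not_le, exists_prop]

variable [PseudoMetricSpace X]

theorem bowenRel_triangle {f : ℝ → X → X} {t δ ε : ℝ} {x y z : X}
    (hxy : (x, y) ∈ bowenRel f t δ) (hyz : (y, z) ∈ bowenRel f t ε) :
    (x, z) ∈ bowenRel f t (δ + ε) := fun s hs =>
  (dist_triangle _ _ _).trans (add_le_add (hxy s hs) (hyz s hs))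

theorem bowenRel_mono_right {f : ℝ → X → X} {t δ ε : ℝ} (h : δ ≤ ε) :
    bowenRel f t δ ⊆ bowenRel f t ε := fun _ hp s hs => (hp s hs).trans h

variable [CompactSpace X] (ϕ : Flow ℝ X) (t : ℝ) {δ : ℝ}

theorem exists_dist_lt_imp_mem_bowenRel (hδ : 0 < δ) :
    ∃ η > 0, ∀ x y : X, dist x y < η → (x, y) ∈ bowenRel ϕ t δ := by
  have hunif := (isCompact_Icc.prod isCompact_univ).uniformContinuousOn_of_continuous
    (s := Icc (0 : ℝ) t ×ˢ (univ : Set X)) ϕ.cont'.continuousOn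
  obtain ⟨η, hη, hclose⟩ := Metric.uniformContinuousOn_iff.1 hunif δ hδ
  refine ⟨η, hη, fun x y hxy s hs => ?_⟩
  refine (hclose (s, x) ⟨hs, mem_univ _⟩ (s, y) ⟨hs, mem_univ _⟩ ?_).le
  simpa [Prod.dist_eq, hη] using hxy

variable {ϕ t} in
theorem finite_of_isSeparated_bowenRel (hδ : 0 < δ) {E : Set X}
    (hE : (bowenRel ϕ t δ).IsSeparated E) : E.Finite := by
  obtain ⟨η, hη, hclose⟩ := exists_dist_lt_imp_mem_bowenRel ϕ t hδ
  obtain ⟨F, -, hF, hcover⟩ := isCompact_univ (X := X).finite_cover_balls (half_pos hη)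
  have hcenter : ∀ x : X, ∃ c ∈ F, dist x c < η / 2 := fun x => by simpa using hcover (mem_univ x)
  choose c hcF hc using hcenter
  refine Set.Finite.of_injOn (fun x _ => hcF x) (fun x hx y hy hxy => ?_) hF
  refine hE.eq hx hy (not_not.2 (hclose x y ?_))
  have hcy := hc y
  rw [← hxy] at hcy
  linarith [dist_triangle_right x y (c x), hc x]

theorem exists_finset_isSeparated_isCover_bowenRel (hδ : 0 < δ) (A : Set X) :
    ∃ E : Finset X, (E : Set X) ⊆ A ∧ (bowenRel ϕ t δ).IsSeparated E ∧
      (bowenRel ϕ t δ).IsCover A E := by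
  have : (bowenRel ϕ t δ).IsRefl := ⟨fun x s _ => by simpa using hδ.le⟩
  have : (bowenRel ϕ t δ).IsSymm := ⟨fun x y hxy s hs => by rw [dist_comm]; exact hxy s hs⟩
  obtain ⟨E, hE⟩ := zorn_subset {E : Set X | E ⊆ A ∧ (bowenRel ϕ t δ).IsSeparated E}
    fun c hc hchain => ⟨⋃₀ c, ⟨sUnion_subset fun E hE => (hc hE).1,
      hchain.pairwise_sUnion.2 fun E hE => (hc hE).2⟩, fun _ => subset_sUnion_of_mem⟩
  lift E to Finset X using finite_of_isSeparated_bowenRel hδ hE.1.2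
  exact ⟨E, hE.1.1, hE.1.2, .of_maximal_isSeparated hE⟩

end BowenRel

section MaximalInvariantSet

/-- The maximal invariant set of `K` under `f`: the points whose full orbit stays in `K`. -/
def maximalInvariantSet (f : ℝ → X → X) (K : Set X) : Set X :=
  {x | ∀ t : ℝ, f t x ∈ K}

theorem flow_mem_maximalInvariantSet [TopologicalSpace X] {ϕ : Flow ℝ X} {K : Set X} {x : X}
    (hx : x ∈ maximalInvariantSet ϕ K) (s : ℝ) : ϕ s x ∈ maximalInvariantSet ϕ K := fun t => by
  rw [← ϕ.map_add]
  exact hx (t + s)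

theorem orbitSegments_mono (f : ℝ → X → X) {V W : Set X} (h : V ⊆ W) :
    orbitSegments f V ⊆ orbitSegments f W := fun _ hp => ⟨hp.1, fun s hs => h (hp.2 s hs)⟩

theorem maximalInvariantSet_prod_subset_orbitSegments [TopologicalSpace X] {ϕ : Flow ℝ X}
    {K V : Set X} (h : maximalInvariantSet ϕ K ⊆ V) :
    maximalInvariantSet ϕ K ×ˢ Ioi (0 : ℝ) ⊆ orbitSegments ϕ V := fun _ hp =>
  ⟨hp.2, fun s _ => h (flow_mem_maximalInvariantSet hp.1 s)⟩

theorem flow_flow_mem_of_mem_orbitSegments [TopologicalSpace X] {ϕ : Flow ℝ X} {K : Set X}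
    {x : X} {r t T : ℝ} (hx : (x, t) ∈ orbitSegments ϕ K) (hr : T ≤ r) (hrt : r + T < t) :
    ∀ s ∈ Icc (-T) T, ϕ s (ϕ r x) ∈ K := fun s hs => by
  rw [← ϕ.map_add]
  exact hx.2 (s + r) ⟨by linarith [hs.1], show s + r < t by linarith [hs.2]⟩

theorem exists_setOf_forall_Icc_mem_subset [TopologicalSpace X] [CompactSpace X] (ϕ : Flow ℝ X)
    {K W : Set X} (hK : IsClosed K) (hW : IsOpen W) (h : maximalInvariantSet ϕ K ⊆ W) :
    ∃ T : ℝ, {x | ∀ s ∈ Icc (-T) T, ϕ s x ∈ K} ⊆ W := by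
  have hclosed (T : ℝ) : IsClosed {x | ∀ s ∈ Icc (-T) T, ϕ s x ∈ K} := by
    simp only [ofPred_forall]
    exact isClosed_biInter fun s _ => hK.preimage (ϕ.continuous_toFun s)
  have hanti : Antitone fun T : ℝ => {x | ∀ s ∈ Icc (-T) T, ϕ s x ∈ K} :=
    fun _ _ hT _ hx s hs => hx s (Icc_subset_Icc (neg_le_neg hT) hT hs)
  refine exists_subset_nhds_of_isCompact' hanti.directed_ge (fun T => (hclosed T).isCompact)
    hclosed fun z hz => hW.mem_nhds (h fun s => ?_)
  exact mem_iInter.1 hz |s| s ⟨neg_abs_le s, le_abs_self s⟩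

theorem exists_isCover_bowenRel_setOf_forall_Icc_mem [PseudoMetricSpace X] [CompactSpace X]
    {ϕ : Flow ℝ X} {K E : Set X} (hK : IsClosed K) {τ δ ε : ℝ} (hε : 0 < ε)
    (hE : (bowenRel ϕ τ δ).IsCover (maximalInvariantSet ϕ K) E) :
    ∃ T : ℝ, (bowenRel ϕ τ (ε + δ)).IsCover {x | ∀ s ∈ Icc (-T) T, ϕ s x ∈ K} E := by
  obtain ⟨η, hη, hclose⟩ := exists_dist_lt_imp_mem_bowenRel ϕ τ hε
  obtain ⟨T, hT⟩ := exists_setOf_forall_Icc_mem_subset ϕ hK Metric.isOpen_thickening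
    (Metric.self_subset_thickening hη _)
  refine ⟨T, fun x hx => ?_⟩
  obtain ⟨z, hz, hxz⟩ := Metric.mem_thickening_iff.1 (hT hx)
  obtain ⟨y, hy, hzy⟩ := hE hz
  exact ⟨y, hy, bowenRel_triangle (hclose x z hxz) hzy⟩

end MaximalInvariantSet

section BirkhoffIntegral

/-- The integral `Φ₀(x, t)` of `φ` along the orbit segment of `x` of length `t`. -/
noncomputable def birkhoffIntegral (f : ℝ → X → X) (φ : X → ℝ) (t : ℝ) (x : X) : ℝ :=
  ∫ s in (0 : ℝ)..t, φ (f s x)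

theorem abs_birkhoffIntegral_le {f : ℝ → X → X} {φ : X → ℝ} {M : ℝ} (hM : ∀ x, |φ x| ≤ M)
    (t : ℝ) (x : X) : |birkhoffIntegral f φ t x| ≤ M * |t| := by
  simpa [birkhoffIntegral] using intervalIntegral.norm_integral_le_of_norm_le_const (a := 0)
    (b := t) (f := fun s => φ (f s x)) (C := M) fun s _ => hM (f s x)

theorem birkhoffIntegral_add [TopologicalSpace X] (ϕ : Flow ℝ X) {φ : X → ℝ} (hφ : Continuous φ)
    (s t : ℝ) (x : X) : birkhoffIntegral ϕ φ (s + t) x =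
      birkhoffIntegral ϕ φ s x + birkhoffIntegral ϕ φ t (ϕ s x) := by
  have hint (a b : ℝ) : IntervalIntegrable (fun r => φ (ϕ r x)) MeasureTheory.volume a b :=
    Continuous.intervalIntegrable (by fun_prop) a b
  simp only [birkhoffIntegral, ← ϕ.map_add]
  rw [intervalIntegral.integral_comp_add_right (fun r => φ (ϕ r x)), zero_add, add_comm t s,
    intervalIntegral.integral_add_adjacent_intervals (hint 0 s) (hint s (s + t))]

theorem birkhoffIntegral_natCast_mul [TopologicalSpace X] (ϕ : Flow ℝ X) {φ : X → ℝ}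
    (hφ : Continuous φ) (τ : ℝ) (x : X) (n : ℕ) : birkhoffIntegral ϕ φ (n * τ) x =
      ∑ j ∈ Finset.range n, birkhoffIntegral ϕ φ τ (ϕ (j * τ) x) := by
  induction n with
  | zero => simp [birkhoffIntegral]
  | succ n ih =>
    rw [Finset.sum_range_succ, ← ih, ← birkhoffIntegral_add ϕ hφ, Nat.cast_succ, add_one_mul]

theorem birkhoffIntegral_le_of_mem_bowenRel [PseudoMetricSpace X] {ϕ : Flow ℝ X} {φ : X → ℝ}
    (hφ : Continuous φ) {δ v : ℝ} (hv : ∀ x y, dist x y ≤ δ → φ x ≤ φ y + v) {t : ℝ} (ht : 0 ≤ t)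
    {x y : X} (hxy : (x, y) ∈ bowenRel ϕ t δ) :
    birkhoffIntegral ϕ φ t x ≤ birkhoffIntegral ϕ φ t y + t * v := by
  have hcont (z : X) : Continuous fun s => φ (ϕ s z) := by fun_prop
  calc birkhoffIntegral ϕ φ t x ≤ ∫ s in (0 : ℝ)..t, (φ (ϕ s y) + v) :=
        intervalIntegral.integral_mono_on ht ((hcont x).intervalIntegrable _ _)
          (((hcont y).add continuous_const).intervalIntegrable _ _)
          fun s hs => hv _ _ (hxy s hs)
    _ = birkhoffIntegral ϕ φ t y + t * v := by
        rw [intervalIntegral.integral_add ((hcont y).intervalIntegrable _ _)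
          (continuous_const.intervalIntegrable _ _)]
        simp [birkhoffIntegral]

end BirkhoffIntegral

section Partition

/-- The weight `exp Φ₀(x, t)` of the orbit segment `(x, t)` in a partition sum. -/
noncomputable def orbitWeight (f : ℝ → X → X) (φ : X → ℝ) (t : ℝ) (x : X) : ℝ≥0∞ :=
  ENNReal.ofReal (Real.exp (birkhoffIntegral f φ t x))

section PseudoMetric

variable [PseudoMetricSpace X] {ϕ : Flow ℝ X} {φ : X → ℝ} {δ v M t τ : ℝ} {N : ℕ}

theorem orbitWeight_le_mul_prod (hφ : Continuous φ) (hM : ∀ x, |φ x| ≤ M)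
    (hv : ∀ x y, dist x y ≤ δ → φ x ≤ φ y + v) (hτ : 0 ≤ τ) (htN : t ≤ N * τ)
    (hNt : N * τ ≤ t + τ) {x : X} {c : Fin N → X}
    (hc : ∀ j : Fin N, (ϕ (j * τ) x, c j) ∈ bowenRel ϕ τ δ) :
    orbitWeight ϕ φ t x ≤ ENNReal.ofReal (Real.exp (N * (τ * v) + M * τ)) *
      ∏ j, orbitWeight ϕ φ τ (c j) := by
  have hM0 : 0 ≤ M := (abs_nonneg _).trans (hM x)
  have htail : birkhoffIntegral ϕ φ t x ≤ birkhoffIntegral ϕ φ (N * τ) x + M * τ := by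
    have hsplit := birkhoffIntegral_add ϕ hφ t (N * τ - t) x
    rw [add_sub_cancel] at hsplit
    have hrest := abs_birkhoffIntegral_le (f := ϕ) hM (N * τ - t) (ϕ t x)
    rw [abs_of_nonneg (sub_nonneg.2 htN)] at hrest
    have hlen : M * (N * τ - t) ≤ M * τ := by gcongr; linarith
    linarith [neg_le_of_abs_le hrest]
  have hblocks : birkhoffIntegral ϕ φ (N * τ) x ≤
      ∑ j, birkhoffIntegral ϕ φ τ (c j) + N * (τ * v) := by
    rw [birkhoffIntegral_natCast_mul ϕ hφ, Finset.sum_range]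
    refine (Finset.sum_le_sum fun j _ =>
      birkhoffIntegral_le_of_mem_bowenRel hφ hv hτ (hc j)).trans_eq ?_
    simp [Finset.sum_add_distrib]
  simp only [orbitWeight]
  rw [← ENNReal.ofReal_prod_of_nonneg fun _ _ => (Real.exp_pos _).le, ← Real.exp_sum,
    ← ENNReal.ofReal_mul (Real.exp_pos _).le, ← Real.exp_add]
  gcongr
  linarith

theorem exists_mem_bowenRel_of_mem_orbitSegments {K : Set X} {L F : Finset X} {T : ℝ}
    (hL : (bowenRel ϕ τ δ).IsCover {x | ∀ s ∈ Icc (-T) T, ϕ s x ∈ K} L)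
    (hF : (bowenRel ϕ τ δ).IsCover univ F) {k n : ℕ} (hτ : 0 < τ) (hk : T ≤ k * τ)
    (hnt : n * τ ≤ t) {x : X} (hx : (x, t) ∈ orbitSegments ϕ K) (j : ℕ) :
    ∃ y ∈ if k ≤ j ∧ j + k < n then L else F, (ϕ (j * τ) x, y) ∈ bowenRel ϕ τ δ := by
  split_ifs with hj
  · have hstart : (k : ℝ) * τ ≤ j * τ := by gcongr; exact hj.1
    have hend : ((j : ℝ) + k) * τ < n * τ := by gcongr; exact_mod_cast hj.2
    exact hL (flow_flow_mem_of_mem_orbitSegments hx (hk.trans hstart) (by linarith))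
  · exact hF (mem_univ _)

end PseudoMetric

variable [MetricSpace X]

theorem partitionFn_le_iff {f : ℝ → X → X} {φ : X → ℝ} {C : Set (X × ℝ)} {δ t : ℝ} {b : ℝ≥0∞} :
    partitionFn f φ C δ t ≤ b ↔ ∀ E : Finset X, (E : Set X) ⊆ {x | (x, t) ∈ C} →
      IsSeparatedSet f t δ (E : Set X) → ∑ x ∈ E, orbitWeight f φ t x ≤ b := by
  simp only [partitionFn, iSup_le_iff, orbitWeight, birkhoffIntegral]

theorem sum_orbitWeight_le_partitionFn {f : ℝ → X → X} (φ : X → ℝ) {C : Set (X × ℝ)} {δ t : ℝ}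
    {E : Finset X} (hE : (E : Set X) ⊆ {x | (x, t) ∈ C})
    (hsep : IsSeparatedSet f t δ (E : Set X)) :
    ∑ x ∈ E, orbitWeight f φ t x ≤ partitionFn f φ C δ t :=
  partitionFn_le_iff.1 le_rfl E hE hsep

theorem partitionFn_mono (f : ℝ → X → X) (φ : X → ℝ) {C D : Set (X × ℝ)} (hCD : C ⊆ D)
    {δ ε : ℝ} (hδ : δ ≤ ε) (t : ℝ) : partitionFn f φ C ε t ≤ partitionFn f φ D δ t := by
  refine partitionFn_le_iff.2 fun E hE hsep =>
    sum_orbitWeight_le_partitionFn φ (fun x hx => hCD (hE hx)) ?_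
  rw [isSeparatedSet_iff_isSeparated_bowenRel] at hsep ⊢
  exact hsep.mono_left (bowenRel_mono_right hδ)

variable {ϕ : Flow ℝ X} {φ : X → ℝ} {δ v M t τ : ℝ} {N : ℕ}

theorem injOn_of_mem_bowenRel {E : Set X} (hE : IsSeparatedSet ϕ t (δ + δ) E) (hτ : 0 < τ)
    (htN : t < N * τ) {c : X → Fin N → X}
    (hc : ∀ x ∈ E, ∀ j : Fin N, (ϕ (j * τ) x, c x j) ∈ bowenRel ϕ τ δ) : InjOn c E := by
  intro x hx y hy hxy
  by_contra hne
  obtain ⟨s, hs, hdist⟩ := hE x hx y hy hne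
  obtain ⟨j, hjs, hsj⟩ : ∃ j : Fin N, j * τ ≤ s ∧ s ≤ (j + 1) * τ := by
    refine ⟨⟨⌊s / τ⌋₊, (Nat.floor_lt (div_nonneg hs.1 hτ.le)).2 ?_⟩, ?_, ?_⟩
    · exact (div_lt_iff₀ hτ).2 (hs.2.trans_lt htN)
    · exact (le_div_iff₀ hτ).1 (Nat.floor_le (div_nonneg hs.1 hτ.le))
    · exact (div_le_iff₀ hτ).1 (Nat.lt_floor_add_one _).le
  have hblock : s - j * τ ∈ Icc 0 τ := ⟨by linarith, by linarith⟩
  have hcx := hc x hx j _ hblock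
  have hcy := hc y hy j _ hblock
  simp only [← ϕ.map_add, sub_add_cancel, ← hxy] at hcx hcy
  linarith [dist_triangle_right (ϕ s x) (ϕ s y) (ϕ (s - j * τ) (c x j))]

theorem sum_orbitWeight_le_mul_prod_sum (hφ : Continuous φ) (hM : ∀ x, |φ x| ≤ M)
    (hv : ∀ x y, dist x y ≤ δ → φ x ≤ φ y + v) (hτ : 0 < τ) (htN : t < N * τ)
    (hNt : N * τ ≤ t + τ) {E : Finset X} (hE : IsSeparatedSet ϕ t (δ + δ) (E : Set X))
    {S : Fin N → Finset X}
    (hS : ∀ x ∈ E, ∀ j : Fin N, ∃ y ∈ S j, (ϕ (j * τ) x, y) ∈ bowenRel ϕ τ δ) :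
    ∑ x ∈ E, orbitWeight ϕ φ t x ≤ ENNReal.ofReal (Real.exp (N * (τ * v) + M * τ)) *
      ∏ j, ∑ y ∈ S j, orbitWeight ϕ φ τ y := by
  choose! c hcS hc using hS
  exact sum_le_mul_prod_sum_of_injOn (injOn_of_mem_bowenRel hE hτ htN hc) hcS
    fun x hx => orbitWeight_le_mul_prod hφ hM hv hτ.le htN.le hNt (hc x hx)

theorem partitionFn_orbitSegments_le_of_isCover (hφ : Continuous φ) (hM : ∀ x, |φ x| ≤ M)
    (hv : ∀ x y, dist x y ≤ δ → φ x ≤ φ y + v) (hv0 : 0 ≤ v) (hτ : 0 < τ) {K : Set X}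
    {L F : Finset X} {T : ℝ}
    (hL : (bowenRel ϕ τ δ).IsCover {x | ∀ s ∈ Icc (-T) T, ϕ s x ∈ K} L)
    (hF : (bowenRel ϕ τ δ).IsCover univ F) {k : ℕ} (hk : T ≤ k * τ) (ht : 0 ≤ t) :
    partitionFn ϕ φ (orbitSegments ϕ K) (δ + δ) t ≤
      ENNReal.ofReal (Real.exp (τ * v + M * τ)) *
          max 1 (∑ y ∈ F, orbitWeight ϕ φ τ y) ^ (2 * k + 1) *
        ENNReal.ofReal (Real.exp (v * t)) *
        (∑ y ∈ L, orbitWeight ϕ φ τ y) ^ (⌊t / τ⌋₊ - 2 * k) := by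
  set n := ⌊t / τ⌋₊
  set b := max 1 (∑ y ∈ F, orbitWeight ϕ φ τ y)
  have hnt : n * τ ≤ t := (le_div_iff₀ hτ).1 (Nat.floor_le (div_nonneg ht hτ.le))
  have htn : t < (n + 1 : ℕ) * τ := by
    exact_mod_cast (div_lt_iff₀ hτ).1 (Nat.lt_floor_add_one (t / τ))
  have hexp : (n + 1 : ℕ) * (τ * v) + M * τ ≤ (τ * v + M * τ) + v * t := by
    push_cast
    linarith [mul_le_mul_of_nonneg_right hnt hv0]
  refine partitionFn_le_iff.2 fun E hE hsep => ?_
  calc ∑ x ∈ E, orbitWeight ϕ φ t x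
      ≤ ENNReal.ofReal (Real.exp ((n + 1 : ℕ) * (τ * v) + M * τ)) * ∏ j : Fin (n + 1),
          ∑ y ∈ if k ≤ (j : ℕ) ∧ j + k < n then L else F, orbitWeight ϕ φ τ y :=
        sum_orbitWeight_le_mul_prod_sum hφ hM hv hτ htn (by push_cast; linarith) hsep
          fun x hx j => exists_mem_bowenRel_of_mem_orbitSegments hL hF hτ hk hnt (hE hx) j
    _ ≤ ENNReal.ofReal (Real.exp ((τ * v + M * τ) + v * t)) * ∏ j : Fin (n + 1),
          (if k ≤ (j : ℕ) ∧ j + k < n then ∑ y ∈ L, orbitWeight ϕ φ τ y else b) := by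
        gcongr with j
        split_ifs
        · rfl
        · exact le_max_right _ _
    _ ≤ ENNReal.ofReal (Real.exp ((τ * v + M * τ) + v * t)) *
          ((∑ y ∈ L, orbitWeight ϕ φ τ y) ^ (n - 2 * k) * b ^ (2 * k + 1)) := by
        rw [Fin.prod_univ_eq_prod_range
          (fun j => if k ≤ j ∧ j + k < n then ∑ y ∈ L, orbitWeight ϕ φ τ y else b)]
        gcongr
        exact prod_range_ite_interior_le n k _ (le_max_left _ _)
    _ = _ := by
        rw [Real.exp_add, ENNReal.ofReal_mul (Real.exp_pos _).le]
        ring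

theorem exists_partitionFn_orbitSegments_le [CompactSpace X] (ϕ : Flow ℝ X) {K : Set X}
    (hK : IsClosed K) (hφ : Continuous φ) (hδ : 0 < δ)
    (hv : ∀ x y, dist x y ≤ δ + δ → φ x ≤ φ y + v) (hv0 : 0 ≤ v) (hτ : 0 < τ) :
    ∃ A : ℝ≥0∞, A ≠ ∞ ∧ ∃ m : ℕ, ∀ t > 0,
      partitionFn ϕ φ (orbitSegments ϕ K) (δ + δ + (δ + δ)) t ≤
        A * ENNReal.ofReal (Real.exp (v * t)) *
          partitionFn ϕ φ (maximalInvariantSet ϕ K ×ˢ Ioi 0) δ τ ^ (⌊t / τ⌋₊ - m) := by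
  obtain ⟨M, hM⟩ : ∃ M, ∀ x, |φ x| ≤ M := by
    obtain ⟨M, hM⟩ := isCompact_univ.exists_bound_of_continuousOn hφ.continuousOn
    exact ⟨M, fun x => hM x (mem_univ x)⟩
  obtain ⟨L, hLΛ, hLsep, hLcover⟩ :=
    exists_finset_isSeparated_isCover_bowenRel ϕ τ hδ (maximalInvariantSet ϕ K)
  obtain ⟨F, -, -, hF⟩ :=
    exists_finset_isSeparated_isCover_bowenRel ϕ τ (add_pos hδ hδ) univ
  obtain ⟨T, hT⟩ := exists_isCover_bowenRel_setOf_forall_Icc_mem hK hδ hLcover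
  obtain ⟨k, hk⟩ := exists_nat_ge (T / τ)
  refine ⟨ENNReal.ofReal (Real.exp (τ * v + M * τ)) *
    max 1 (∑ y ∈ F, orbitWeight ϕ φ τ y) ^ (2 * k + 1), ?_, 2 * k, fun t ht => ?_⟩
  · have hsum : ∑ y ∈ F, orbitWeight ϕ φ τ y ≠ ∞ := ENNReal.sum_ne_top.2 fun _ _ => ofReal_ne_top
    exact mul_ne_top ofReal_ne_top (pow_ne_top (max_ne_top one_ne_top hsum))
  · have hLsum : ∑ y ∈ L, orbitWeight ϕ φ τ y ≤
        partitionFn ϕ φ (maximalInvariantSet ϕ K ×ˢ Ioi 0) δ τ :=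
      sum_orbitWeight_le_partitionFn φ (fun y hy => ⟨hLΛ hy, hτ⟩)
        (isSeparatedSet_iff_isSeparated_bowenRel.2 hLsep)
    refine (partitionFn_orbitSegments_le_of_isCover hφ hM hv hv0 hτ hT hF
      ((div_le_iff₀ hτ).1 hk) ht.le).trans ?_
    gcongr

end Partition

section Pressure

variable [MetricSpace X]

theorem pressureAt_mono (f : ℝ → X → X) (φ : X → ℝ) {C D : Set (X × ℝ)} (hCD : C ⊆ D)
    {δ ε : ℝ} (hδ : δ ≤ ε) : pressureAt f φ C ε ≤ pressureAt f φ D δ := by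
  refine limsup_le_limsup ?_
  filter_upwards [eventually_gt_atTop 0] with t ht
  exact mul_le_mul_of_nonneg_left (ENNReal.log_monotone (partitionFn_mono f φ hCD hδ t))
    (by exact_mod_cast (one_div_pos.2 ht).le)

theorem pressure_mono (f : ℝ → X → X) (φ : X → ℝ) {C D : Set (X × ℝ)} (hCD : C ⊆ D) :
    pressure f φ C ≤ pressure f φ D :=
  limsup_le_limsup (.of_forall fun _ => pressureAt_mono f φ hCD le_rfl)

theorem pressureAt_le_pressure (f : ℝ → X → X) (φ : X → ℝ) (C : Set (X × ℝ)) {δ : ℝ}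
    (hδ : 0 < δ) : pressureAt f φ C δ ≤ pressure f φ C := by
  refine le_limsup_of_frequently_le (Eventually.frequently ?_)
  filter_upwards [Ioo_mem_nhdsGT hδ] with ε hε
  exact pressureAt_mono f φ subset_rfl hε.2.le

variable [CompactSpace X] (ϕ : Flow ℝ X) {K : Set X} {φ : X → ℝ}

theorem pressureAt_orbitSegments_le (hK : IsClosed K) (hφ : Continuous φ) {δ v : ℝ} (hδ : 0 < δ)
    (hv : ∀ x y, dist x y ≤ δ + δ → φ x ≤ φ y + v) (hv0 : 0 ≤ v) :
    pressureAt ϕ φ (orbitSegments ϕ K) (δ + δ + (δ + δ)) ≤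
      pressureAt ϕ φ (maximalInvariantSet ϕ K ×ˢ Ioi 0) δ + v := by
  have hsub (a b : EReal) : a - v ≤ b ↔ a ≤ b + v :=
    EReal.sub_le_iff_le_add (.inl (EReal.coe_ne_bot v)) (.inl (EReal.coe_ne_top v))
  rw [← hsub]
  refine le_limsup_of_frequently_le (Eventually.frequently ?_)
  filter_upwards [eventually_gt_atTop 0] with τ hτ
  obtain ⟨A, hA, m, hbound⟩ := exists_partitionFn_orbitSegments_le ϕ hK hφ hδ hv hv0 hτ
  exact (hsub _ _).2 (limsup_log_le_of_le_mul_exp_mul_pow hA hτ hbound)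

theorem pressure_orbitSegments_le (hK : IsClosed K) (hφ : Continuous φ) :
    pressure ϕ φ (orbitSegments ϕ K) ≤ pressure ϕ φ (maximalInvariantSet ϕ K ×ˢ Ioi 0) := by
  refine ereal_le_of_forall_pos_le_add fun v hv => ?_
  obtain ⟨r, hr, hosc⟩ := Metric.uniformContinuous_iff.1
    (CompactSpace.uniformContinuous_of_continuous hφ) v hv
  refine limsup_le_of_le (h := ?_)
  filter_upwards [Ioo_mem_nhdsGT hr] with δ hδ
  have hquarter : 0 < δ / 4 := div_pos hδ.1 four_pos
  have hv_osc (x y : X) (hxy : dist x y ≤ δ / 4 + δ / 4) : φ x ≤ φ y + v := by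
    have hlt := hosc (a := x) (b := y) (by linarith [hδ.1, hδ.2])
    rw [Real.dist_eq] at hlt
    linarith [le_abs_self (φ x - φ y)]
  calc pressureAt ϕ φ (orbitSegments ϕ K) δ
      = pressureAt ϕ φ (orbitSegments ϕ K) (δ / 4 + δ / 4 + (δ / 4 + δ / 4)) := by ring_nf
    _ ≤ pressureAt ϕ φ (maximalInvariantSet ϕ K ×ˢ Ioi 0) (δ / 4) + v :=
        pressureAt_orbitSegments_le ϕ hK hφ hquarter hv_osc hv.le
    _ ≤ pressure ϕ φ (maximalInvariantSet ϕ K ×ˢ Ioi 0) + v := by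
        gcongr
        exact pressureAt_le_pressure ϕ φ _ hquarter

theorem pressure_eq_on_isolating_neighborhood_general (hK : IsClosed K) {V : Set X}
    (hΛV : maximalInvariantSet ϕ K ⊆ V) (hVK : V ⊆ K) (hφ : Continuous φ) :
    pressure ϕ φ (orbitSegments ϕ V) = pressure ϕ φ (maximalInvariantSet ϕ K ×ˢ Ioi 0) :=
  le_antisymm
    ((pressure_mono ϕ φ (orbitSegments_mono ϕ hVK)).trans (pressure_orbitSegments_le ϕ hK hφ))
    (pressure_mono ϕ φ (maximalInvariantSet_prod_subset_orbitSegments hΛV))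

end Pressure

/-- **Equality of pressures on isolating neighborhoods** (Lemma 3.1).  If `U` is an
isolating neighborhood of the maximal invariant set
`Λ = {x : f_t(x) ∈ closure U for all t}` (nonempty with `Λ ⊆ U`), `U₁` is any open set
with `Λ ⊆ U₁ ⊆ U` and `φ` is continuous, then
`P(O(U), φ) = P(O(U₁), φ) = P(Λ×(0,∞), φ) = P(φ, X|_Λ)`. -/
theorem pressure_eq_on_isolating_neighborhood {X : Type*} [MetricSpace X] [CompactSpace X]
    (f : ℝ → X → X)
    (hcont : Continuous fun p : ℝ × X => f p.1 p.2)
    (hf0 : ∀ x : X, f 0 x = x)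
    (hadd : ∀ s t : ℝ, ∀ x : X, f (s + t) x = f s (f t x))
    (U : Set X) (hU : IsOpen U)
    (hne : {x : X | ∀ t : ℝ, f t x ∈ closure U}.Nonempty)
    (hiso : {x : X | ∀ t : ℝ, f t x ∈ closure U} ⊆ U)
    (U₁ : Set X) (hU₁ : IsOpen U₁)
    (hsub₁ : {x : X | ∀ t : ℝ, f t x ∈ closure U} ⊆ U₁) (hsub₂ : U₁ ⊆ U)
    (φ : X → ℝ) (hφ : Continuous φ) :
    pressure f φ (orbitSegments f U) = pressure f φ (orbitSegments f U₁) ∧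
    pressure f φ (orbitSegments f U₁) =
      pressure f φ ({x : X | ∀ t : ℝ, f t x ∈ closure U} ×ˢ Set.Ioi (0 : ℝ)) := by
  have heq {V : Set X} := pressure_eq_on_isolating_neighborhood_general
    ⟨f, hcont, hadd, hf0⟩ (isClosed_closure (s := U)) (V := V) (φ := φ)
  have heq₁ := heq hsub₁ (hsub₂.trans subset_closure) hφ
  exact ⟨(heq hiso subset_closure hφ).trans heq₁.symm, heq₁⟩
end

section
/- Let X be a compact metric space and f : X → X a continuous map. Let θ₀ ∈ (0,1] and β₁ ∈ (0,1). Let W ⊆ X be a Borel set, let Σ ⊆ W be a set of fixed points of f, and let S ⊆ X be a Borel set with S ∩ W = ∅. Assume that every ergodic f-invariant Borel probability measure ν on X that is not the Dirac mass at a point of Σ satisfies ν(S) ≥ θ₀ − ν(W). Then every f-invariant Borel probability measure μ with μ(W) < β₁ satisfies μ(S) > θ₀ − 2β₁. -/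
open MeasureTheory

/-!
The conditional measures `κ x` of `μ` given the σ-algebra of `f`-invariant sets form its ergodic
decomposition. They are `f`-invariant by uniqueness of disintegrations. For ergodicity, the mean
ergodic theorem gives, for each `B` in a countable generating π-system, a sequence of times along
which the Birkhoff averages of the indicator of `B` converge `μ`-a.e. to an invariant function.
Invariant functions are constant `κ x`-a.e., and integrating the averages over an invariant set `C`
then shows that `B` and `C` are independent under `κ x`. Hence `C` is independent of itself.

A Dirac mass at a point of `W` gives `W` mass one, so `θ ≤ ν S + ν W` for every ergodic `ν`, and
integrating over the decomposition gives the same for `μ`.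
-/

open Filter Topology ProbabilityTheory

section BirkhoffAverage

variable {X E : Type*} [NormedAddCommGroup E] [NormedSpace ℝ E] {f : X → X} {φ : X → E}

lemma norm_birkhoffAverage_le {C : ℝ} (hC : ∀ x, ‖φ x‖ ≤ C) (n : ℕ) (x : X) :
    ‖birkhoffAverage ℝ f φ n x‖ ≤ C := by
  have hC₀ : 0 ≤ C := (norm_nonneg _).trans (hC x)
  calc ‖birkhoffAverage ℝ f φ n x‖
      = (n : ℝ)⁻¹ * ‖∑ k ∈ Finset.range n, φ (f^[k] x)‖ := by
        simp [birkhoffAverage, birkhoffSum, norm_smul]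
    _ ≤ (n : ℝ)⁻¹ * (n * C) := by
        gcongr
        simpa using norm_sum_le_of_le (Finset.range n) fun k _ ↦ hC (f^[k] x)
    _ ≤ C := by
        rw [← mul_assoc]
        exact mul_le_of_le_one_left hC₀ inv_mul_le_one

variable [MeasurableSpace X] {μ : Measure X}

lemma stronglyMeasurable_birkhoffAverage (hf : Measurable f) (hφ : StronglyMeasurable φ) (n : ℕ) :
    StronglyMeasurable (birkhoffAverage ℝ f φ n) :=
  (Finset.stronglyMeasurable_fun_sum _ fun k _ ↦
    hφ.comp_measurable (hf.iterate k)).const_smul (n : ℝ)⁻¹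

lemma integral_birkhoffAverage (hf : MeasurePreserving f μ μ) (hφ : Integrable φ μ)
    {n : ℕ} (hn : n ≠ 0) : ∫ x, birkhoffAverage ℝ f φ n x ∂μ = ∫ x, φ x ∂μ := by
  have integrable_iterate (k : ℕ) : Integrable (fun x ↦ φ (f^[k] x)) μ :=
    (hf.iterate k).integrable_comp_of_integrable hφ
  have integral_iterate (k : ℕ) : ∫ x, φ (f^[k] x) ∂μ = ∫ x, φ x ∂μ := by
    have hk := hf.iterate k
    conv_rhs => rw [← hk.map_eq]
    exact (integral_map hk.aemeasurable (hk.map_eq.symm ▸ hφ.aestronglyMeasurable)).symm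
  simp only [birkhoffAverage, birkhoffSum]
  rw [integral_smul, integral_finsetSum _ fun k _ ↦ integrable_iterate k]
  simp [integral_iterate, ← Nat.cast_smul_eq_nsmul ℝ, smul_smul, hn]

lemma integral_eq_of_tendsto_birkhoffAverage [IsFiniteMeasure μ] (hf : MeasurePreserving f μ μ)
    (hφ : StronglyMeasurable φ) {C : ℝ} (hC : ∀ x, ‖φ x‖ ≤ C) {ns : ℕ → ℕ}
    (hns : Tendsto ns atTop atTop) {g : X → E}
    (hg : ∀ᵐ x ∂μ, Tendsto (fun k ↦ birkhoffAverage ℝ f φ (ns k) x) atTop (𝓝 (g x))) :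
    ∫ x, g x ∂μ = ∫ x, φ x ∂μ := by
  have integrable_φ : Integrable φ μ := .of_bound hφ.aestronglyMeasurable C (.of_forall hC)
  have tendsto_integral : Tendsto (fun k ↦ ∫ x, birkhoffAverage ℝ f φ (ns k) x ∂μ) atTop
      (𝓝 (∫ x, g x ∂μ)) :=
    tendsto_integral_of_dominated_convergence (fun _ ↦ C)
      (fun k ↦ (stronglyMeasurable_birkhoffAverage hf.measurable hφ _).aestronglyMeasurable)
      (integrable_const C) (fun k ↦ .of_forall (norm_birkhoffAverage_le hC _)) hg
  refine tendsto_nhds_unique tendsto_integral (tendsto_const_nhds.congr' ?_)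
  filter_upwards [hns.eventually_ne_atTop 0] with k hk
  exact (integral_birkhoffAverage hf integrable_φ hk).symm

lemma coeFn_birkhoffAverage_compMeasurePreserving {p : ENNReal} (hf : MeasurePreserving f μ μ)
    (hφ : MemLp φ p μ) (n : ℕ) :
    (birkhoffAverage ℝ (Lp.compMeasurePreserving f hf) id n (hφ.toLp φ) : Lp E p μ) =ᵐ[μ]
      birkhoffAverage ℝ f φ n := by
  set koopman := Lp.compMeasurePreserving (E := E) (p := p) f hf
  have coeFn_iterate (k : ℕ) : koopman^[k] (hφ.toLp φ) =ᵐ[μ] φ ∘ f^[k] := by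
    rw [Lp.compMeasurePreserving_iterate]
    exact (hφ.comp_measurePreserving (hf.iterate k)).coeFn_toLp
  filter_upwards [Lp.coeFn_smul (n : ℝ)⁻¹ (birkhoffSum koopman id n (hφ.toLp φ)),
    Lp.coeFn_fun_finsetSum (Finset.range n) fun k ↦ koopman^[k] (hφ.toLp φ),
    ae_all_iff.2 coeFn_iterate] with x hsmul hsum hiter
  simp only [birkhoffAverage, birkhoffSum, Pi.smul_apply, id, Function.comp_apply] at *
  simp only [hsmul, hsum, hiter]

end BirkhoffAverage

lemma limUnder_eq_of_tendsto_dist {ι E : Type*} [PseudoMetricSpace E] [Nonempty E] {l : Filter ι}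
    {u v : ι → E} (h : Tendsto (fun i ↦ dist (u i) (v i)) l (𝓝 0)) :
    limUnder l u = limUnder l v := by
  have same_limits : (fun a ↦ Tendsto u l (𝓝 a)) = fun a ↦ Tendsto v l (𝓝 a) :=
    funext fun _ ↦ propext (tendsto_iff_of_dist h)
  exact congrArg Classical.epsilon same_limits

section MeanErgodic

variable {X E : Type*} [MeasurableSpace X] {μ : Measure X} {f : X → X}
  [NormedAddCommGroup E] [InnerProductSpace ℝ E] [CompleteSpace E] {φ : X → E}

lemma exists_strictMono_tendsto_birkhoffAverage_ae (hf : MeasurePreserving f μ μ)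
    (hφ : MemLp φ 2 μ) :
    ∃ ns : ℕ → ℕ, StrictMono ns ∧ ∃ g : X → E,
      ∀ᵐ x ∂μ, Tendsto (fun k ↦ birkhoffAverage ℝ f φ (ns k) x) atTop (𝓝 (g x)) := by
  let koopman : Lp E 2 μ →L[ℝ] Lp E 2 μ :=
    (Lp.compMeasurePreservingₗᵢ ℝ f hf).toContinuousLinearMap
  have mean_ergodic := koopman.tendsto_birkhoffAverage_orthogonalProjection
    (LinearIsometry.norm_toContinuousLinearMap_le _) (hφ.toLp φ)
  obtain ⟨ns, hns, hlim⟩ := (tendstoInMeasure_of_tendsto_Lp mean_ergodic).exists_seq_tendsto_ae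
  have coeFn_average := ae_all_iff.2 (coeFn_birkhoffAverage_compMeasurePreserving hf hφ)
  exact ⟨ns, hns, _, hlim.mp (coeFn_average.mono fun x hcoe hx ↦ hx.congr fun k ↦ hcoe (ns k))⟩

-- Boundedness makes the pointwise limit invariant everywhere, not just almost everywhere.
lemma exists_measurable_invariants_tendsto_birkhoffAverage_ae [MeasurableSpace E] [BorelSpace E]
    [IsFiniteMeasure μ] (hf : MeasurePreserving f μ μ) (hφ : StronglyMeasurable φ)
    {C : ℝ} (hC : ∀ x, ‖φ x‖ ≤ C) :
    ∃ ns : ℕ → ℕ, StrictMono ns ∧ ∃ g : X → E, Measurable[MeasurableSpace.invariants f] g ∧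
      ∀ᵐ x ∂μ, Tendsto (fun k ↦ birkhoffAverage ℝ f φ (ns k) x) atTop (𝓝 (g x)) := by
  have bounded_range : Bornology.IsBounded (Set.range φ) :=
    isBounded_iff_forall_norm_le.2 ⟨C, Set.forall_mem_range.2 hC⟩
  obtain ⟨ns, hns, g, hg⟩ := exists_strictMono_tendsto_birkhoffAverage_ae hf
    (.of_bound hφ.aestronglyMeasurable C (.of_forall hC))
  let avgLim (x : X) : E := limUnder atTop fun k ↦ birkhoffAverage ℝ f φ (ns k) x
  have avgLim_measurable : Measurable avgLim :=
    (StronglyMeasurable.limUnder fun k ↦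
      stronglyMeasurable_birkhoffAverage hf.measurable hφ (ns k)).measurable
  have avgLim_comp : avgLim ∘ f = avgLim := funext fun x ↦ limUnder_eq_of_tendsto_dist <| by
    simpa only [Function.comp_def, dist_eq_norm, norm_zero] using
      ((tendsto_birkhoffAverage_apply_sub_birkhoffAverage' ℝ bounded_range f x).comp
        hns.tendsto_atTop).norm
  refine ⟨ns, hns, avgLim, MeasurableSpace.measurable_invariants_dom.2
    ⟨avgLim_measurable, fun s _ ↦ by rw [avgLim_comp]⟩, ?_⟩
  filter_upwards [hg] with x hx
  exact tendsto_nhds_limUnder ⟨g x, hx⟩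

end MeanErgodic

lemma norm_indicator_one_le_one {X : Type*} (B : Set X) (x : X) :
    ‖B.indicator (1 : X → ℝ) x‖ ≤ 1 := by
  simpa using norm_indicator_le_norm_self (s := B) (1 : X → ℝ) x

section ErgodicityCriterion

variable {X : Type*} [mX : MeasurableSpace X] {ν : Measure X} {f : X → X}

lemma preErgodic_of_forall_prob_eq_zero_or_one [IsProbabilityMeasure ν]
    (h : ∀ C, MeasurableSet C → f ⁻¹' C = C → ν C = 0 ∨ ν C = 1) : PreErgodic f ν where
  aeconst_set C hC hfC := by
    rw [eventuallyConst_set']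
    simpa [hC] using h C hC hfC

lemma measureReal_inter_eq_of_tendsto_birkhoffAverage_indicator [IsFiniteMeasure ν]
    (hf : MeasurePreserving f ν ν) {B C : Set X} (hB : MeasurableSet B) (hC : MeasurableSet C)
    (hfC : f ⁻¹' C = C) {ns : ℕ → ℕ} (hns : Tendsto ns atTop atTop) {c : ℝ}
    (hc : ∀ᵐ x ∂ν, Tendsto (fun k ↦ birkhoffAverage ℝ f (B.indicator 1) (ns k) x) atTop (𝓝 c)) :
    ν.real (B ∩ C) = ν.real C * c := by
  have hf_restrict : MeasurePreserving f (ν.restrict C) (ν.restrict C) := by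
    simpa only [hfC] using hf.restrict_preimage hC
  calc ν.real (B ∩ C) = ∫ x in C, B.indicator 1 x ∂ν := by
        rw [integral_indicator_one hB, measureReal_restrict_apply hB]
    _ = ∫ _ in C, c ∂ν :=
        (integral_eq_of_tendsto_birkhoffAverage hf_restrict (stronglyMeasurable_one.indicator hB)
          (norm_indicator_one_le_one B) hns (ae_restrict_of_ae hc)).symm
    _ = ν.real C * c := by rw [setIntegral_const, smul_eq_mul]

theorem ergodic_of_tendsto_birkhoffAverage_indicator [IsProbabilityMeasure ν]
    (hf : MeasurePreserving f ν ν) {𝒜 : Set (Set X)} (hpi : IsPiSystem 𝒜)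
    (hgen : mX = MeasurableSpace.generateFrom 𝒜)
    (hconst : ∀ B ∈ 𝒜, ∃ ns : ℕ → ℕ, Tendsto ns atTop atTop ∧ ∃ c : ℝ, ∀ᵐ x ∂ν,
      Tendsto (fun k ↦ birkhoffAverage ℝ f (B.indicator 1) (ns k) x) atTop (𝓝 c)) :
    Ergodic f ν := by
  refine ⟨hf, preErgodic_of_forall_prob_eq_zero_or_one fun C hC hfC ↦ ?_⟩
  have indep_basis : IndepSets 𝒜 {C} ν := by
    rw [IndepSets_iff]
    rintro B _ hB (rfl : _ = C)
    obtain ⟨ns, hns, c, hc⟩ := hconst B hB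
    have hB_meas : MeasurableSet B := hgen ▸ MeasurableSpace.measurableSet_generateFrom hB
    obtain rfl : ν.real B = c := by
      simpa using measureReal_inter_eq_of_tendsto_birkhoffAverage_indicator hf hB_meas .univ
        Set.preimage_univ hns hc
    rw [← ENNReal.toReal_eq_toReal_iff' (by finiteness) (by finiteness), ENNReal.toReal_mul,
      mul_comm]
    exact measureReal_inter_eq_of_tendsto_birkhoffAverage_indicator hf hB_meas hC hfC hns hc
  have indep_C : Indep mX (MeasurableSpace.generateFrom {C}) ν :=
    indep_basis.indep le_rfl (MeasurableSpace.generateFrom_le (by simpa using hC)) hpi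
      (IsPiSystem.singleton C) hgen rfl
  exact measure_eq_zero_or_one_of_indepSet_self
    (indep_C.indepSet_of_measurableSet hC (MeasurableSpace.measurableSet_generateFrom rfl))

end ErgodicityCriterion

lemma exists_countable_isPiSystem_generateFrom (X : Type*) [m : MeasurableSpace X]
    [MeasurableSpace.CountablyGenerated X] :
    ∃ 𝒜 : Set (Set X), 𝒜.Countable ∧ IsPiSystem 𝒜 ∧ m = MeasurableSpace.generateFrom 𝒜 := by
  refine ⟨generateSetAlgebra (MeasurableSpace.countableGeneratingSet X),
    countable_generateSetAlgebra MeasurableSpace.countable_countableGeneratingSet,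
    isSetAlgebra_generateSetAlgebra.isSetRing.isSetSemiring.isPiSystem, ?_⟩
  rw [generateFrom_generateSetAlgebra_eq, MeasurableSpace.generateFrom_countableGeneratingSet]

lemma measurable_diag_of_le {Ω : Type*} {m mΩ : MeasurableSpace Ω} (hm : m ≤ mΩ) :
    @Measurable Ω (Ω × Ω) mΩ (m.prod mΩ) Function.diag :=
  (measurable_id'' hm).prodMk measurable_id

section CondExpKernel

variable {Ω : Type*} {m mΩ : MeasurableSpace Ω} [StandardBorelSpace Ω]
  {μ : Measure Ω} [IsFiniteMeasure μ]

lemma integral_measureReal_condExpKernel (hm : m ≤ mΩ) {B : Set Ω} (hB : MeasurableSet B) :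
    ∫ x, (condExpKernel μ m x).real B ∂μ = μ.real B :=
  calc ∫ x, (condExpKernel μ m x).real B ∂μ = ∫ x, (μ⟦B | m⟧) x ∂μ :=
        integral_congr_ae (condExpKernel_ae_eq_condExp hm hB)
    _ = ∫ x, B.indicator 1 x ∂μ := integral_condExp hm
    _ = μ.real B := integral_indicator_one hB

lemma ae_ae_condExpKernel_of_ae (hm : m ≤ mΩ) {P : Ω → Prop} (hP : ∀ᵐ x ∂μ, P x) :
    ∀ᵐ x ∂μ, ∀ᵐ y ∂condExpKernel μ m x, P y := by
  rw [← condExpKernel_comp_trim (μ := μ) hm] at hP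
  exact ae_of_ae_trim hm (Measure.ae_ae_of_ae_comp hP)

lemma ae_ae_condExpKernel_eq_of_measurable (hm : m ≤ mΩ) {β : Type*} [MeasurableSpace β]
    [MeasurableEq β] {g : Ω → β} (hg : Measurable[m] g) :
    ∀ᵐ x ∂μ, ∀ᵐ y ∂condExpKernel μ m x, g y = g x := by
  have measurableSet_ne : MeasurableSet[m.prod mΩ] {p : Ω × Ω | ¬g p.2 = g p.1} :=
    (@measurableSet_eq_fun _ _ (m.prod mΩ) _ _ _ _ ((hg.mono hm le_rfl).comp
      (@measurable_snd _ _ m mΩ)) (hg.comp (@measurable_fst _ _ m mΩ))).compl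
  refine ae_of_ae_trim hm (Measure.ae_ae_of_ae_compProd (p := fun p ↦ g p.2 = g p.1) ?_)
  rw [compProd_trim_condExpKernel hm, ae_iff,
    Measure.map_apply (measurable_diag_of_le hm) measurableSet_ne]
  simp

lemma compProd_trim_condExpKernel_prod (hm : m ≤ mΩ) {C B : Set Ω}
    (hC : MeasurableSet[m] C) (hB : MeasurableSet B) :
    (μ.trim hm ⊗ₘ condExpKernel μ m) (C ×ˢ B) = μ (C ∩ B) := by
  rw [compProd_trim_condExpKernel hm, Measure.map_apply (measurable_diag_of_le hm) (hC.prod hB)]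
  rfl

end CondExpKernel

section ErgodicDecomposition

variable {X : Type*} [mX : MeasurableSpace X] [StandardBorelSpace X] {μ : Measure X}
  [IsFiniteMeasure μ] {f : X → X}

theorem ae_measurePreserving_condExpKernel_invariants (hf : MeasurePreserving f μ μ) :
    ∀ᵐ x ∂μ, MeasurePreserving f (condExpKernel μ (MeasurableSpace.invariants f) x)
      (condExpKernel μ (MeasurableSpace.invariants f) x) := by
  have hm := MeasurableSpace.invariants_le f
  set κ := condExpKernel μ (MeasurableSpace.invariants f)
  have compProd_map_eq : μ.trim hm ⊗ₘ κ.map f = μ.trim hm ⊗ₘ κ := by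
    refine Measure.ext_prod fun {C B} hC hB ↦ ?_
    calc (μ.trim hm ⊗ₘ κ.map f) (C ×ˢ B) = (μ.trim hm ⊗ₘ κ) (C ×ˢ (f ⁻¹' B)) := by
          rw [Measure.compProd_apply_prod hC hB,
            Measure.compProd_apply_prod hC (hf.measurable hB)]
          simp only [Kernel.map_apply' _ hf.measurable _ hB]
      _ = μ (C ∩ f ⁻¹' B) := compProd_trim_condExpKernel_prod hm hC (hf.measurable hB)
      _ = μ (f ⁻¹' (C ∩ B)) := by rw [Set.preimage_inter, hC.2]
      _ = μ (C ∩ B) := hf.measure_preimage (hC.1.inter hB).nullMeasurableSet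
      _ = (μ.trim hm ⊗ₘ κ) (C ×ˢ B) := (compProd_trim_condExpKernel_prod hm hC hB).symm
  filter_upwards [ae_of_ae_trim hm (Kernel.ae_eq_of_compProd_eq compProd_map_eq)] with x hx
  exact ⟨hf.measurable, by rw [← Kernel.map_apply _ hf.measurable, hx]⟩

lemma ae_exists_tendsto_birkhoffAverage_condExpKernel_invariants (hf : MeasurePreserving f μ μ)
    {φ : X → ℝ} (hφ : StronglyMeasurable φ) {C : ℝ} (hC : ∀ x, ‖φ x‖ ≤ C) :
    ∀ᵐ x ∂μ, ∃ ns : ℕ → ℕ, Tendsto ns atTop atTop ∧ ∃ c : ℝ,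
      ∀ᵐ y ∂condExpKernel μ (MeasurableSpace.invariants f) x,
        Tendsto (fun k ↦ birkhoffAverage ℝ f φ (ns k) y) atTop (𝓝 c) := by
  have hm := MeasurableSpace.invariants_le f
  obtain ⟨ns, hns, g, hg, hlim⟩ :=
    exists_measurable_invariants_tendsto_birkhoffAverage_ae hf hφ hC
  filter_upwards [ae_ae_condExpKernel_of_ae hm hlim, ae_ae_condExpKernel_eq_of_measurable hm hg]
    with x hlim_x hg_x
  refine ⟨ns, hns.tendsto_atTop, g x, ?_⟩
  filter_upwards [hlim_x, hg_x] with y hlim_y hg_y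
  rwa [← hg_y]

theorem ae_ergodic_condExpKernel_invariants (hf : MeasurePreserving f μ μ) :
    ∀ᵐ x ∂μ, Ergodic f (condExpKernel μ (MeasurableSpace.invariants f) x) := by
  obtain ⟨𝒜, h𝒜, hpi, hgen⟩ := exists_countable_isPiSystem_generateFrom X
  have averages_ae_const := (ae_ball_iff h𝒜).2 fun B hB ↦
    have hB_meas : MeasurableSet B := hgen ▸ MeasurableSpace.measurableSet_generateFrom hB
    ae_exists_tendsto_birkhoffAverage_condExpKernel_invariants hf
      (stronglyMeasurable_one.indicator hB_meas) (norm_indicator_one_le_one B)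
  filter_upwards [ae_measurePreserving_condExpKernel_invariants hf, averages_ae_const]
    with x hx_preserving hx_const
  exact ergodic_of_tendsto_birkhoffAverage_indicator hx_preserving hpi hgen hx_const

end ErgodicDecomposition

theorem invariant_measure_bound_of_ergodic_general {X : Type*} [MeasurableSpace X]
    [StandardBorelSpace X] {f : X → X} {θ : ℝ} (hθ : θ ≤ 1) {W Sing S : Set X}
    (hW : MeasurableSet W) (hSingW : Sing ⊆ W) (hS : MeasurableSet S)
    (herg : ∀ ν : Measure X, IsProbabilityMeasure ν → Ergodic f ν →
      (∀ x ∈ Sing, ν ≠ Measure.dirac x) → θ - ν.real W ≤ ν.real S)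
    {μ : Measure X} [IsProbabilityMeasure μ] (hμ : MeasurePreserving f μ μ) :
    θ - μ.real W ≤ μ.real S := by
  have ergodic_bound (ν : Measure X) [IsProbabilityMeasure ν] (hν : Ergodic f ν) :
      θ ≤ ν.real S + ν.real W := by
    by_cases hdirac : ∃ x ∈ Sing, ν = Measure.dirac x
    · obtain ⟨x, hx, rfl⟩ := hdirac
      have measureReal_W : (Measure.dirac x).real W = 1 := by
        simp [measureReal_def, Measure.dirac_apply_of_mem (hSingW hx)]
      linarith [measureReal_nonneg (μ := Measure.dirac x) (s := S)]
    · push Not at hdirac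
      linarith [herg ν inferInstance hν hdirac]
  have hm := MeasurableSpace.invariants_le f
  set κ := condExpKernel μ (MeasurableSpace.invariants f)
  rw [sub_le_iff_le_add]
  calc θ = ∫ _, θ ∂μ := by simp
    _ ≤ ∫ x, ((κ x).real S + (κ x).real W) ∂μ :=
        integral_mono_ae (integrable_const θ)
          ((integrable_toReal_condExpKernel hS).add (integrable_toReal_condExpKernel hW))
          ((ae_ergodic_condExpKernel_invariants hμ).mono fun x hx ↦ ergodic_bound (κ x) hx)
    _ = μ.real S + μ.real W := by
        rw [integral_add (integrable_toReal_condExpKernel hS) (integrable_toReal_condExpKernel hW),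
          ← integral_measureReal_condExpKernel hm hS, ← integral_measureReal_condExpKernel hm hW]

/-- **From ergodic measures to invariant measures** (Lemma 8.2, via ergodic
decomposition).  Let `f : X → X` be continuous on a compact metric space, `θ₀ ∈ (0,1]`,
`β₁ ∈ (0,1)`, `W` Borel, `Sing ⊆ W` a set of fixed points of `f`, and `S` Borel with
`S ∩ W = ∅`.  Assume every ergodic `f`-invariant Borel probability measure `ν` that is
not the Dirac mass at a point of `Sing` satisfies `ν(S) ≥ θ₀ − ν(W)`.  Then every
`f`-invariant Borel probability measure `μ` with `μ(W) < β₁` satisfies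
`μ(S) > θ₀ − 2β₁`. -/
theorem invariant_measure_bound_of_ergodic {X : Type*} [MetricSpace X] [CompactSpace X]
    [MeasurableSpace X] [BorelSpace X]
    (f : X → X) (hf : Continuous f)
    (θ₀ β₁ : ℝ) (hθ₀ : 0 < θ₀) (hθ₁ : θ₀ ≤ 1) (hβ₀ : 0 < β₁) (hβ₁ : β₁ < 1)
    (W : Set X) (hW : MeasurableSet W)
    (Sing : Set X) (hSingW : Sing ⊆ W) (hSingFix : ∀ x ∈ Sing, f x = x)
    (S : Set X) (hS : MeasurableSet S) (hSW : S ∩ W = ∅)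
    (herg : ∀ ν : Measure X, IsProbabilityMeasure ν → Ergodic f ν →
      (∀ x ∈ Sing, ν ≠ Measure.dirac x) → θ₀ - (ν W).toReal ≤ (ν S).toReal)
    (μ : Measure X) [IsProbabilityMeasure μ] (hμ : MeasurePreserving f μ μ)
    (hμW : (μ W).toReal < β₁) :
    θ₀ - 2 * β₁ < (μ S).toReal := by
  have general : θ₀ - (μ W).toReal ≤ (μ S).toReal :=
    invariant_measure_bound_of_ergodic_general hθ₁ hW hSingW hS herg hμ
  linarith
end
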